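/- arXiv:2404.05664 — 2 statements merged into one kernel-verified Lean document; each statement's English description precedes it below -/
import Mathlib

section
/- The total number of nodes at level ℓ among all ordered trees with n edges equals ((2ℓ+1)/(2n+1)) * C(2n+1, n-ℓ). -/
open scoped Classical

/-- Height (number of up-steps minus number of down-steps) after the first `k` steps
of the word `w`, where `true` encodes an up-step and `false` a down-step. -/
def heightAt (n : ℕ) (w : Fin n → Bool) (k : ℕ) : ℤ :=
  ((Finset.univ.filter (fun i : Fin n => (i : ℕ) < k ∧ w i = true)).card : ℤ) -
  ((Finset.univ.filter (fun i : Fin n => (i : ℕ) < k ∧ w i = false)).card : ℤ)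

/-- `w` is a Dyck word of semilength `n` (the standard encoding of an ordered tree
with `n` edges via its pre-order traversal: `true` = step away from the root). -/
def IsDyck (n : ℕ) (w : Fin (2 * n) → Bool) : Prop :=
  (Finset.univ.filter (fun i : Fin (2 * n) => w i = true)).card = n ∧
  ∀ k : ℕ, k ≤ 2 * n → 0 ≤ heightAt (2 * n) w k

/-- The ordered trees with `n` edges, encoded as Dyck words. -/
noncomputable def dyckWords (n : ℕ) : Finset (Fin (2 * n) → Bool) :=
  Finset.univ.filter (fun w => IsDyck n w)

/-- The nodes of the tree encoded by `w` : `none` is the root and `some i` for an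
up-step `i` (`w i = true`) is the node this step leads to. -/
def isNode (n : ℕ) (w : Fin (2 * n) → Bool) : Option (Fin (2 * n)) → Prop
  | none => True
  | some i => w i = true

/-- The level (distance to the root) of a node. -/
def nodeLevel (n : ℕ) (w : Fin (2 * n) → Bool) : Option (Fin (2 * n)) → ℤ
  | none => 0
  | some i => heightAt (2 * n) w ((i : ℕ) + 1)

/-- The set of nodes at level `ℓ` of the tree encoded by `w`. -/
noncomputable def nodesAtLevel (n : ℕ) (w : Fin (2 * n) → Bool) (ℓ : ℕ) :
    Finset (Option (Fin (2 * n))) :=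
  Finset.univ.filter (fun v => isNode n w v ∧ nodeLevel n w v = (ℓ : ℤ))

/-- The number of nodes visited before the given node in the depth-first (pre-order)
traversal: the root comes first, and the non-root nodes appear in the order of their
up-steps in the Dyck word. -/
noncomputable def dfsScore (n : ℕ) (w : Fin (2 * n) → Bool) : Option (Fin (2 * n)) → ℕ
  | none => 0
  | some i => 1 +
      (Finset.univ.filter (fun j : Fin (2 * n) => (j : ℕ) < (i : ℕ) ∧ w j = true)).card

/-- The number of nodes visited before the given node in breadth-first search:
nodes are visited level by level, and from left to right within a level. -/
noncomputable def bfsScore (n : ℕ) (w : Fin (2 * n) → Bool) : Option (Fin (2 * n)) → ℕ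
  | none => 0
  | some i => 1 +
      (Finset.univ.filter (fun j : Fin (2 * n) =>
        w j = true ∧ (nodeLevel n w (some j) < nodeLevel n w (some i) ∨
          (nodeLevel n w (some j) = nodeLevel n w (some i) ∧ (j : ℕ) < (i : ℕ))))).card

/-- Sum of the dfs scores of all nodes at level `ℓ` over all ordered trees with `n` edges. -/
noncomputable def totalD (n ℓ : ℕ) : ℕ :=
  ∑ w ∈ dyckWords n, ∑ v ∈ nodesAtLevel n w ℓ, dfsScore n w v

/-- Sum of the bfs scores of all nodes at level `ℓ` over all ordered trees with `n` edges. -/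
noncomputable def totalB (n ℓ : ℕ) : ℕ :=
  ∑ w ∈ dyckWords n, ∑ v ∈ nodesAtLevel n w ℓ, bfsScore n w v

/-- Total number of nodes at level `ℓ` among all ordered trees with `n` edges. -/
noncomputable def levelCount (n ℓ : ℕ) : ℕ :=
  ∑ w ∈ dyckWords n, (nodesAtLevel n w ℓ).card


/-- `w` is a path of `m` steps from height `h` to height `0` staying nonnegative. -/
def PathTo (m : ℕ) (h : ℤ) (w : Fin m → Bool) : Prop :=
  h + heightAt m w m = 0 ∧ ∀ k : ℕ, k ≤ m → 0 ≤ h + heightAt m w k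

noncomputable def cntD (m : ℕ) (h : ℤ) : ℕ :=
  ∑ w : Fin m → Bool, if PathTo m h w then 1 else 0

noncomputable def cntI (m : ℕ) (l h : ℤ) (w : Fin m → Bool) : ℕ :=
  ∑ i : Fin m, if w i = true ∧ h + heightAt m w ((i : ℕ) + 1) = l then 1 else 0

noncomputable def cntN (m : ℕ) (l h : ℤ) : ℕ :=
  ∑ w : Fin m → Bool, if PathTo m h w then cntI m l h w else 0

theorem heightAt_eq_sum (n : ℕ) (w : Fin n → Bool) (k : ℕ) :
    heightAt n w k = ∑ i : Fin n, if (i : ℕ) < k then (if w i = true then (1 : ℤ) else -1) else 0 := by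
  unfold heightAt
  rw [Finset.card_filter, Finset.card_filter]
  push_cast
  rw [← Finset.sum_sub_distrib]
  refine Finset.sum_congr rfl fun i _ => ?_
  by_cases h1 : (i : ℕ) < k <;> cases h2 : w i <;> simp [h1]

theorem heightAt_zero (n : ℕ) (w : Fin n → Bool) : heightAt n w 0 = 0 := by
  simp [heightAt_eq_sum]

theorem heightAt_cons (m : ℕ) (b : Bool) (w : Fin m → Bool) (k : ℕ) :
    heightAt (m + 1) (Fin.cons b w) (k + 1) = (if b = true then 1 else -1) + heightAt m w k := by
  simp [heightAt_eq_sum, Fin.sum_univ_succ]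

theorem pathTo_cons (m : ℕ) (h : ℤ) (b : Bool) (w : Fin m → Bool) :
    PathTo (m + 1) h (Fin.cons b w) ↔ 0 ≤ h ∧ PathTo m (h + (if b = true then 1 else -1)) w := by
  unfold PathTo
  rw [heightAt_cons, ← add_assoc]
  constructor
  · rintro ⟨h1, h2⟩
    refine ⟨by simpa [heightAt_zero] using h2 0 (by omega), h1, fun k hk => ?_⟩
    have := h2 (k + 1) (by omega)
    rwa [heightAt_cons, ← add_assoc] at this
  · rintro ⟨h0, h1, h2⟩
    refine ⟨h1, fun k hk => ?_⟩
    cases k with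
    | zero => simpa [heightAt_zero] using h0
    | succ k =>
      rw [heightAt_cons, ← add_assoc]
      exact h2 k (by omega)

theorem sum_cons (m : ℕ) (f : (Fin (m + 1) → Bool) → ℕ) :
    ∑ w, f w = ∑ w : Fin m → Bool, f (Fin.cons true w) + ∑ w : Fin m → Bool, f (Fin.cons false w) := by
  rw [← Equiv.sum_comp (Fin.consEquiv (fun _ : Fin (m + 1) => Bool)) f, Fintype.sum_prod_type]
  simp [Fin.consEquiv]

theorem cntI_cons (m : ℕ) (l h : ℤ) (b : Bool) (w : Fin m → Bool) :
    cntI (m + 1) l h (Fin.cons b w) =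
      (if b = true ∧ h + 1 = l then 1 else 0) + cntI m l (h + (if b = true then 1 else -1)) w := by
  unfold cntI
  rw [Fin.sum_univ_succ]
  congr 1
  · rw [heightAt_cons]
    cases b <;> simp [heightAt_zero]
  · refine Finset.sum_congr rfl fun i _ => ?_
    rw [heightAt_cons, ← add_assoc]
    simp

theorem not_pathTo (m : ℕ) (h : ℤ) (hh : h < 0) (w : Fin m → Bool) : ¬ PathTo m h w := by
  intro hp
  have := hp.2 0 (by omega)
  rw [heightAt_zero] at this
  omega

theorem cntD_neg (m : ℕ) (h : ℤ) (hh : h < 0) : cntD m h = 0 := by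
  simp [cntD, not_pathTo m h hh]

theorem cntN_neg (m : ℕ) (l h : ℤ) (hh : h < 0) : cntN m l h = 0 := by
  simp [cntN, not_pathTo m h hh]

theorem cntD_zero (h : ℤ) : cntD 0 h = if h = 0 then 1 else 0 := by
  simp only [cntD, PathTo, heightAt_eq_sum]
  by_cases hh : h = 0 <;> simp [hh]

theorem cntN_zero (l h : ℤ) : cntN 0 l h = 0 := by
  simp [cntN, cntI]

theorem cntD_succ (m : ℕ) (h : ℤ) (hh : 0 ≤ h) :
    cntD (m + 1) h = cntD m (h + 1) + cntD m (h - 1) := by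
  unfold cntD
  rw [sum_cons]
  simp [pathTo_cons, hh, sub_eq_add_neg]

theorem cntN_succ (m : ℕ) (l h : ℤ) (hh : 0 ≤ h) :
    cntN (m + 1) l h = (if h + 1 = l then cntD m (h + 1) else 0) +
      cntN m l (h + 1) + cntN m l (h - 1) := by
  unfold cntN
  rw [sum_cons]
  congr 1
  · have : (if h + 1 = l then cntD m (h + 1) else 0) =
        ∑ w : Fin m → Bool, if PathTo m (h + 1) w then (if h + 1 = l then 1 else 0) else 0 := by
      unfold cntD
      split_ifs <;> simp
    rw [this, ← Finset.sum_add_distrib]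
    refine Finset.sum_congr rfl fun w _ => ?_
    simp only [pathTo_cons, cntI_cons, hh, true_and, if_true]
    split_ifs <;> simp
  · refine Finset.sum_congr rfl fun w _ => ?_
    simp [pathTo_cons, cntI_cons, hh, sub_eq_add_neg]

theorem cntD_big (m : ℕ) : ∀ h : ℤ, (m : ℤ) < h → cntD m h = 0 := by
  induction m with
  | zero => intro h hh; rw [cntD_zero, if_neg]; simp at hh; omega
  | succ m ih =>
    intro h hh
    push_cast at hh
    rw [cntD_succ m h (by omega), ih _ (by omega), ih _ (by omega)]

theorem cntN_eq (l : ℕ) (m : ℕ) : ∀ h : ℕ, cntN m l h =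
    ∑ j ∈ Finset.range (min (h + 1) l), cntD m ((h : ℤ) + 2 * l - 2 * j) := by
  induction m with
  | zero =>
    intro h
    rw [cntN_zero, eq_comm]
    refine Finset.sum_eq_zero fun j hj => ?_
    rw [Finset.mem_range] at hj
    rw [cntD_big]
    push_cast
    omega
  | succ m ih =>
    intro h
    have key : ∑ j ∈ Finset.range (min (h + 1) l), cntD (m + 1) ((h : ℤ) + 2 * l - 2 * j) =
        ∑ j ∈ Finset.range (min (h + 1) l), cntD m (((h + 1 : ℕ) : ℤ) + 2 * l - 2 * j) +
        ∑ j ∈ Finset.range (min (h + 1) l), cntD m ((h : ℤ) - 1 + 2 * l - 2 * j) := by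
      rw [← Finset.sum_add_distrib]
      refine Finset.sum_congr rfl fun j hj => ?_
      rw [Finset.mem_range] at hj
      rw [cntD_succ _ _ (by omega)]
      congr 2 <;> push_cast <;> ring
    have e2 : cntN m l ((h : ℤ) - 1) =
        ∑ j ∈ Finset.range (min h l), cntD m ((h : ℤ) - 1 + 2 * l - 2 * j) := by
      cases h with
      | zero => simp [cntN_neg]
      | succ h =>
        have := ih h
        push_cast
        simpa using this
    have e1 := ih (h + 1)
    rw [cntN_succ _ _ _ (by omega), key, e2]
    have c : ((h : ℤ) + 1) = ((h + 1 : ℕ) : ℤ) := by push_cast; rfl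
    rw [c, e1]
    rcases lt_trichotomy (h + 1) l with hl | hl | hl
    · rw [if_neg (by omega), min_eq_left (by omega : h + 1 + 1 ≤ l), min_eq_left (by omega : h ≤ l),
        min_eq_left (by omega : h + 1 ≤ l), Finset.sum_range_succ _ (h + 1),
        Finset.sum_range_succ _ h, Finset.sum_range_succ (fun j : ℕ => cntD m ((h : ℤ) - 1 + 2 * l - 2 * j)) h]
      have : ((h + 1 : ℕ) : ℤ) + 2 * l - 2 * ((h + 1 : ℕ) : ℤ) = (h : ℤ) - 1 + 2 * l - 2 * (h : ℤ) := by
        push_cast; ring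
      rw [this]
      ring
    · subst hl
      rw [if_pos rfl, min_eq_right (by omega : h + 1 ≤ h + 1 + 1), min_eq_left (by omega : h ≤ h + 1),
        min_self, Finset.sum_range_succ (fun j : ℕ => cntD m ((h : ℤ) - 1 + 2 * ((h + 1 : ℕ) : ℤ) - 2 * j)) h]
      have : (h : ℤ) - 1 + 2 * ((h + 1 : ℕ) : ℤ) - 2 * (h : ℤ) = ((h + 1 : ℕ) : ℤ) := by
        push_cast; ring
      rw [this]
      ring
    · rw [if_neg (by omega), min_eq_right (by omega : l ≤ h + 1 + 1), min_eq_right (by omega : l ≤ h),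
        min_eq_right (by omega : l ≤ h + 1)]
      ring

theorem cntD_formula (m : ℕ) : ∀ k h : ℕ, m = 2 * k + h →
    (m + 1) * cntD m h = (h + 1) * Nat.choose (m + 1) k := by
  have main : ∀ m : ℕ, (∀ h : ℕ, m = h → cntD m h = 1) ∧ ∀ k h : ℕ, m = 2 * (k + 1) + h →
      cntD m h + Nat.choose m k = Nat.choose m (k + 1) := by
    intro m
    induction m with
    | zero =>
      refine ⟨fun h hh => ?_, fun k h hh => by omega⟩
      subst hh
      simp [cntD_zero]
    | succ m ih =>
      obtain ⟨ih0, ih1⟩ := ih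
      refine ⟨fun h hh => ?_, fun k h hh => ?_⟩
      · subst hh
        rw [cntD_succ _ _ (by omega), cntD_big _ _ (by push_cast; omega)]
        simpa using ih0 m rfl
      · rw [cntD_succ _ _ (by omega)]
        have a1 : cntD m ((h : ℤ) + 1) + (if k = 0 then 0 else Nat.choose m (k - 1)) = Nat.choose m k := by
          cases k with
          | zero => simpa using ih0 (h + 1) (by omega)
          | succ k => simpa using ih1 k (h + 1) (by omega)
        have a2 : cntD m ((h : ℤ) - 1) + Nat.choose m k = Nat.choose m (k + 1) := by
          cases h with
          | zero =>
            rw [cntD_neg _ _ (by simp), zero_add]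
            rw [← Nat.choose_symm_of_eq_add (by omega : m = k + 1 + k)]
          | succ h => simpa using ih1 k h (by omega)
        have a3 : Nat.choose (m + 1) k = (if k = 0 then 0 else Nat.choose m (k - 1)) + Nat.choose m k := by
          cases k with
          | zero => simp
          | succ k => simp [Nat.choose_succ_succ]
        rw [a3, Nat.choose_succ_succ, Nat.succ_eq_add_one]
        omega
  intro k h hm
  cases k with
  | zero =>
    rw [(main m).1 h (by omega)]
    simp; omega
  | succ k =>
    have h1 := (main m).2 k h hm
    have h2 := Nat.choose_succ_right_eq m k
    have h3 := Nat.choose_succ_succ m k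
    have h4 : m - k = k + 2 + h := by omega
    rw [h4] at h2
    rw [Nat.succ_eq_add_one, Nat.succ_eq_add_one] at h3
    rw [h3]
    have hm' : (m : ℤ) = 2 * (k + 1) + h := by exact_mod_cast hm
    zify at *
    rw [hm']
    have : (cntD m h : ℤ) = Nat.choose m (k + 1) - Nat.choose m k := by linarith
    rw [this]
    linear_combination 2 * h2

theorem isDyck_iff (n : ℕ) (w : Fin (2 * n) → Bool) : IsDyck n w ↔ PathTo (2 * n) 0 w := by
  unfold IsDyck PathTo
  simp only [zero_add]
  refine and_congr_left fun _ => ?_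
  have h1 : ∀ b : Bool, (Finset.univ.filter (fun i : Fin (2 * n) => (i : ℕ) < 2 * n ∧ w i = b)) =
      Finset.univ.filter (fun i : Fin (2 * n) => w i = b) := by
    intro b
    ext i
    simp
  have h2 := Finset.card_filter_add_card_filter_not (s := (Finset.univ : Finset (Fin (2 * n))))
    (fun i => w i = true)
  simp only [Bool.not_eq_true, Finset.card_univ, Fintype.card_fin] at h2
  unfold heightAt
  rw [h1, h1]
  omega

theorem card_nodesAtLevel (n l : ℕ) (w : Fin (2 * n) → Bool) :
    (nodesAtLevel n w l).card = (if l = 0 then 1 else 0) + cntI (2 * n) l 0 w := by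
  unfold nodesAtLevel cntI
  rw [Finset.card_filter, Fintype.sum_option]
  have : ((0 : ℤ) = (l : ℤ)) ↔ l = 0 := by omega
  simp [isNode, nodeLevel, this]
  rw [Finset.card_filter]
  refine Finset.sum_congr rfl fun i _ => ?_
  congr

theorem levelCount_eq_cntD (n l : ℕ) : levelCount n l = cntD (2 * n) ((2 * l : ℕ) : ℤ) := by
  have h1 : levelCount n l = (if l = 0 then cntD (2 * n) 0 else 0) + cntN (2 * n) l 0 := by
    unfold levelCount dyckWords cntD cntN
    rw [Finset.sum_filter]
    simp only [isDyck_iff, card_nodesAtLevel]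
    by_cases hl : l = 0
    · simp only [hl, if_true]
      rw [← Finset.sum_add_distrib]
      refine Finset.sum_congr rfl fun w _ => ?_
      split_ifs <;> simp
    · simp [hl]
  have h2 := cntN_eq l (2 * n) 0
  rw [h1]
  cases l with
  | zero => simpa using h2
  | succ l => simpa using h2

/-- The total number of nodes at level ℓ among all ordered trees with n edges equals
((2ℓ+1)/(2n+1))·C(2n+1, n-ℓ). -/
theorem levelCount_eq (n ℓ : ℕ) (h : ℓ ≤ n) :
    (levelCount n ℓ : ℚ) =
      ((2 * ℓ + 1 : ℚ) / (2 * n + 1)) * Nat.choose (2 * n + 1) (n - ℓ) := by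
  have h1 := cntD_formula (2 * n) (n - ℓ) (2 * ℓ) (by omega)
  rw [← levelCount_eq_cntD] at h1
  have h2 : ((2 * n + 1 : ℚ)) * levelCount n ℓ = (2 * ℓ + 1) * Nat.choose (2 * n + 1) (n - ℓ) := by
    exact_mod_cast h1
  have h3 : (2 * n + 1 : ℚ) ≠ 0 := by positivity
  field_simp
  linarith
end

section
/- Let C(z) satisfy C = 1 + zC², and define f_n(z) = ∑_{k=0}^{⌊n/2⌋} C(n-k,k) z^k. Then for all ℓ ≥ 1, the generating function B_ℓ(z) = ∑_n totalB(n,ℓ) z^n satisfies B_ℓ(z) = z^ℓ · C^{3ℓ+1} · ( zC·(d/dz)f_ℓ(−z) − (d/dz)f_{ℓ+1}(−z) ). -/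
open scoped Classical

open Polynomial

/-- The Fibonacci polynomial `f_m(z) = ∑_{k=0}^{⌊m/2⌋} C(m-k,k) z^k` for `m ≥ 0`,
and `f_m = 0` for `m < 0`. -/
noncomputable def fibP (m : ℤ) : Polynomial ℚ :=
  if m < 0 then 0
  else ∑ k ∈ Finset.range (m.toNat / 2 + 1),
    Polynomial.C ((Nat.choose (m.toNat - k) k : ℚ)) * Polynomial.X ^ k

/-- The polynomial `f_m(−z)`. -/
noncomputable def fibPneg (m : ℤ) : Polynomial ℚ := (fibP m).comp (-Polynomial.X)

namespace TB

/-- Bool to Dyck step. -/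
def stp (b : Bool) : DyckStep := if b = true then DyckStep.U else DyckStep.D

/-- word as a list of Dyck steps. -/
def lst {n : ℕ} (w : Fin n → Bool) : List DyckStep := List.ofFn (fun i => stp (w i))

/-- number of up-steps of a list whose end height (starting from `h`) satisfies `P`. -/
noncomputable def cnt (P : ℤ → Prop) : ℤ → List DyckStep → ℕ
  | _, [] => 0
  | h, DyckStep.U :: L => (if P (h + 1) then 1 else 0) + cnt P (h + 1) L
  | h, DyckStep.D :: L => cnt P (h - 1) L

lemma heightAt_eq (n : ℕ) (w : Fin n → Bool) (k : ℕ) :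
    heightAt n w k = ∑ i : Fin n, if (i : ℕ) < k then (if w i = true then (1 : ℤ) else -1) else 0 := by
  unfold heightAt
  rw [Finset.card_filter, Finset.card_filter]
  push_cast
  rw [← Finset.sum_sub_distrib]
  refine Finset.sum_congr rfl fun i _ => ?_
  by_cases h : (i : ℕ) < k <;> cases hw : w i <;> simp [h]

lemma heightAt_zero (n : ℕ) (w : Fin n → Bool) : heightAt n w 0 = 0 := by
  simp [heightAt]

lemma heightAt_succ (n : ℕ) (w : Fin (n + 1) → Bool) (k : ℕ) :
    heightAt (n + 1) w (k + 1) =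
      (if w 0 = true then (1 : ℤ) else -1) + heightAt n (fun i => w i.succ) k := by
  rw [heightAt_eq, heightAt_eq, Fin.sum_univ_succ]
  simp

lemma lst_succ {n : ℕ} (w : Fin (n + 1) → Bool) :
    lst w = stp (w 0) :: lst (fun i => w i.succ) := by
  simp [lst, List.ofFn_succ]

lemma heightAt_take (n : ℕ) (w : Fin n → Bool) (k : ℕ) :
    heightAt n w k = (((lst w).take k).count DyckStep.U : ℤ) - ((lst w).take k).count DyckStep.D := by
  induction n generalizing k with
  | zero => simp [heightAt, lst]
  | succ n ih =>
    cases k with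
    | zero => simp [heightAt]
    | succ k =>
      rw [heightAt_succ, ih, lst_succ]
      cases hw : w 0 <;> simp [stp] <;> ring

lemma card_true (n : ℕ) (w : Fin n → Bool) :
    (Finset.univ.filter (fun i : Fin n => w i = true)).card = (lst w).count DyckStep.U := by
  induction n with
  | zero => simp [lst]
  | succ n ih =>
    have := ih (fun i => w i.succ)
    rw [Finset.card_filter] at this ⊢
    rw [Fin.sum_univ_succ, this, lst_succ]
    cases hw : w 0 <;> simp [stp]
    ring

lemma card_cnt (P : ℤ → Prop) (n : ℕ) (w : Fin n → Bool) (h : ℤ) :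
    (Finset.univ.filter (fun i : Fin n => w i = true ∧ P (h + heightAt n w ((i : ℕ) + 1)))).card
      = cnt P h (lst w) := by
  induction n generalizing h with
  | zero => simp [lst, cnt]
  | succ n ih =>
    have h1 := ih (fun i => w i.succ) (h + 1)
    have h2 := ih (fun i => w i.succ) (h - 1)
    rw [Finset.card_filter] at h1 h2 ⊢
    rw [Fin.sum_univ_succ, lst_succ]
    cases hw : w 0
    · simp only [stp, Fin.val_succ, heightAt_succ, hw]
      simp only [cnt, Bool.false_eq_true, if_false, false_and, zero_add]
      rw [← h2]
      simp only [sub_eq_add_neg, add_assoc]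
    · simp only [stp, Fin.val_succ, heightAt_succ, hw]
      simp only [cnt, if_true, true_and]
      rw [← h1]
      simp [heightAt_zero, add_assoc]

lemma length_lst {n : ℕ} (w : Fin n → Bool) : (lst w).length = n := by simp [lst]

lemma count_add (L : List DyckStep) : L.count DyckStep.U + L.count DyckStep.D = L.length := by
  induction L with
  | nil => simp
  | cons a L ih => cases a <;> simp <;> omega

lemma isDyck_iff (n : ℕ) (w : Fin (2 * n) → Bool) : IsDyck n w ↔
    ((lst w).count DyckStep.U = (lst w).count DyckStep.D ∧
      ∀ i, ((lst w).take i).count DyckStep.D ≤ ((lst w).take i).count DyckStep.U) := by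
  have hl := count_add (lst w)
  rw [length_lst] at hl
  unfold IsDyck
  rw [card_true]
  constructor
  · rintro ⟨h1, h2⟩
    refine ⟨by omega, fun i => ?_⟩
    by_cases hi : i ≤ 2 * n
    · have := h2 i hi
      rw [heightAt_take] at this
      omega
    · rw [List.take_of_length_le (by rw [length_lst]; omega)]
      omega
  · rintro ⟨h1, h2⟩
    refine ⟨by omega, fun i _ => ?_⟩
    have := h2 i
    rw [heightAt_take]
    omega

lemma stp_inj : Function.Injective stp := by
  intro a b h
  cases a <;> cases b <;> simp_all [stp]

lemma lst_inj {n : ℕ} : Function.Injective (lst (n := n)) := by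
  intro a b h
  have := List.ofFn_injective h
  funext i
  exact stp_inj (congrFun this i)

lemma lst_surj {n : ℕ} (L : List DyckStep) (hL : L.length = n) : ∃ w : Fin n → Bool, lst w = L := by
  subst hL
  refine ⟨fun i => decide (L.get i = DyckStep.U), ?_⟩
  unfold lst
  conv_rhs => rw [← List.ofFn_get L]
  congr 1
  funext i
  cases h : L.get i <;> simp at h <;> simp [stp, h]

/-- the tree's list -/
def enc (t : BinaryTree Unit) : List DyckStep := (DyckWord.ofTree t).toList

lemma enc_nil : enc .nil = [] := rfl

lemma enc_node (u : Unit) (p q : BinaryTree Unit) :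
    enc (.node u p q) = DyckStep.U :: (enc p ++ (DyckStep.D :: enc q)) := by
  show ([DyckStep.U] ++ enc p ++ [DyckStep.D]) ++ enc q = _
  simp

lemma sum_dyckWords (n : ℕ) (F : List DyckStep → ℚ) :
    ∑ w ∈ dyckWords n, F (lst w) = ∑ t ∈ BinaryTree.treesOfNumNodesEq n, F (enc t) := by
  refine Finset.sum_bij (fun w hw => DyckWord.toTree ⟨lst w,
    ((isDyck_iff n w).1 (by simpa [dyckWords] using hw)).1,
    ((isDyck_iff n w).1 (by simpa [dyckWords] using hw)).2⟩) ?_ ?_ ?_ ?_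
  · intro w hw
    have hw' : IsDyck n w := by simpa [dyckWords] using hw
    rw [BinaryTree.mem_treesOfNumNodesEq, DyckWord.numNodes_toTree]
    show (lst w).count _ = n
    rw [← card_true]
    exact hw'.1
  · intro a ha b hb h
    have := DyckWord.equivTree.injective h
    rw [DyckWord.mk.injEq] at this
    exact lst_inj this
  · intro t ht
    rw [BinaryTree.mem_treesOfNumNodesEq] at ht
    have h1 : (DyckWord.ofTree t).semilength = n := by
      rw [← DyckWord.numNodes_toTree, DyckWord.toTree_ofTree, ht]
    obtain ⟨w, hw⟩ := lst_surj (n := 2 * n) (enc t) (by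
      rw [← h1, DyckWord.two_mul_semilength_eq_length]; rfl)
    refine ⟨w, ?_, ?_⟩
    · simp only [dyckWords, Finset.mem_filter, Finset.mem_univ, true_and]
      rw [isDyck_iff, hw]
      exact ⟨(DyckWord.ofTree t).count_U_eq_count_D, (DyckWord.ofTree t).count_D_le_count_U⟩
    · simp only [hw]
      exact DyckWord.toTree_ofTree t
  · intro w hw
    simp only [enc, DyckWord.ofTree_toTree]

/-- height of list -/
def hgt (L : List DyckStep) : ℤ := (L.count DyckStep.U : ℤ) - L.count DyckStep.D

lemma cnt_append (P : ℤ → Prop) (h : ℤ) (A B : List DyckStep) :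
    cnt P h (A ++ B) = cnt P h A + cnt P (h + hgt A) B := by
  induction A generalizing h with
  | nil => simp [cnt, hgt]
  | cons a A ih =>
    cases a <;> simp only [List.cons_append, cnt, ih]
    · have e : h + 1 + hgt A = h + hgt (DyckStep.U :: A) := by simp [hgt]; ring
      rw [e, add_assoc]
    · have e : h - 1 + hgt A = h + hgt (DyckStep.D :: A) := by simp [hgt]; ring
      rw [e]

lemma hgt_enc (t : BinaryTree Unit) : hgt (enc t) = 0 := by
  have := (DyckWord.ofTree t).count_U_eq_count_D
  simp [hgt, enc, this]

lemma cnt_node (P : ℤ → Prop) (h : ℤ) (u : Unit) (p q : BinaryTree Unit) :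
    cnt P h (enc (.node u p q)) =
      (if P (h + 1) then 1 else 0) + cnt P (h + 1) (enc p) + cnt P h (enc q) := by
  rw [enc_node, cnt, cnt_append, hgt_enc, cnt]
  simp [add_assoc]

/-- level counts -/
def N : BinaryTree Unit → ℕ → ℕ
  | _, 0 => 1
  | .nil, _ + 1 => 0
  | .node _ p q, l + 1 => N p l + N q (l + 1)

/-- sum of level counts below l -/
def S (t : BinaryTree Unit) (l : ℕ) : ℕ := ∑ j ∈ Finset.range l, N t j

lemma N_zero (t) : N t 0 = 1 := by cases t <;> rfl

lemma S_succ (t l) : S t (l + 1) = S t l + N t l := Finset.sum_range_succ _ _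

lemma S_nil (l) : S .nil (l + 1) = 1 := by
  simp [S, Finset.sum_range_succ', N]

lemma S_node (u p q l) : S (.node u p q) (l + 1) = S p l + S q (l + 1) := by
  simp [S, Finset.sum_range_succ', N, Finset.sum_add_distrib, N_zero, add_assoc]

lemma cnt_low (P : ℤ → Prop) (t : BinaryTree Unit) (h : ℤ) (hP : ∀ x, h < x → ¬ P x) :
    cnt P h (enc t) = 0 := by
  induction t generalizing h with
  | nil => simp [enc_nil, cnt]
  | node u p q ihp ihq =>
    rw [cnt_node, if_neg (hP _ (by omega)), ihp _ (fun x hx => hP x (by omega)), ihq _ hP]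

lemma cnt_eq (t : BinaryTree Unit) (l : ℕ) (h c : ℤ) (hc : c = h + l + 1) :
    cnt (fun x => x = c) h (enc t) = N t (l + 1) := by
  induction t generalizing h l with
  | nil => simp [enc_nil, cnt, N]
  | node u p q ihp ihq =>
    rw [cnt_node, ihq l h hc, N]
    cases l with
    | zero =>
      rw [if_pos (by simp [hc]), cnt_low _ _ _ (fun x hx => by simp at hc; omega), N_zero]
    | succ l =>
      rw [if_neg (by push_cast at hc; omega), ihp l (h + 1) (by push_cast at hc; omega)]
      simp

lemma cnt_lt (t : BinaryTree Unit) (l : ℕ) (h c : ℤ) (hc : c = h + l + 1) :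
    1 + cnt (fun x => x < c) h (enc t) = S t (l + 1) := by
  induction t generalizing h l with
  | nil => simp [enc_nil, cnt, S_nil]
  | node u p q ihp ihq =>
    rw [cnt_node, S_node, ← ihq l h hc]
    cases l with
    | zero =>
      rw [if_neg (by simp [hc]), cnt_low _ _ _ (fun x hx => by simp at hc; omega)]
      simp [S]
    | succ l =>
      rw [if_pos (by push_cast at hc; omega), ← ihp l (h + 1) (by push_cast at hc; omega)]
      ring

lemma sum_rank {m : ℕ} (s : Finset (Fin m)) :
    ∑ i ∈ s, (((s.filter (fun j : Fin m => (j : ℕ) < (i : ℕ))).card : ℕ) : ℚ) = (s.card : ℚ) * (s.card - 1) / 2 := by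
  induction s using Finset.induction_on_max with
  | empty => simp
  | insert a s ha ih =>
    have hna : a ∉ s := fun h => lt_irrefl _ (ha a h)
    rw [Finset.sum_insert hna, Finset.card_insert_of_notMem hna]
    have e1 : (insert a s).filter (fun j : Fin m => (j : ℕ) < (a : ℕ)) = s := by
      ext x
      simp only [Finset.mem_filter, Finset.mem_insert]
      constructor
      · rintro ⟨rfl | h, h2⟩
        · omega
        · exact h
      · intro h
        exact ⟨Or.inr h, ha x h⟩
    have e2 : ∀ i ∈ s, (insert a s).filter (fun j : Fin m => (j : ℕ) < (i : ℕ)) = s.filter (fun j : Fin m => (j : ℕ) < (i : ℕ)) := by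
      intro i hi
      rw [Finset.filter_insert, if_neg]
      have := ha i hi
      rw [Fin.lt_def] at this
      omega
    rw [e1, Finset.sum_congr rfl (fun i hi => by rw [e2 i hi]), ih]
    push_cast
    ring

/-- list statistic -/
noncomputable def QL (l : ℕ) (L : List DyckStep) : ℚ :=
  (cnt (fun x => x = (l : ℤ)) 0 L : ℚ) * (1 + cnt (fun x => x < (l : ℤ)) 0 L : ℕ)
   + (cnt (fun x => x = (l : ℤ)) 0 L : ℚ) * ((cnt (fun x => x = (l : ℤ)) 0 L : ℚ) - 1) / 2

lemma sum_bfs (n l : ℕ) (hl : 1 ≤ l) (w : Fin (2 * n) → Bool) :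
    ((∑ v ∈ nodesAtLevel n w l, bfsScore n w v : ℕ) : ℚ) = QL l (lst w) := by
  set s : Finset (Fin (2 * n)) := Finset.univ.filter
    (fun i : Fin (2 * n) => w i = true ∧ heightAt (2 * n) w ((i : ℕ) + 1) = (l : ℤ)) with hs
  have hcs : s.card = cnt (fun x => x = (l : ℤ)) 0 (lst w) := by
    rw [← card_cnt]; simp [hs]
  have e1 : nodesAtLevel n w l = s.map Function.Embedding.some := by
    ext v
    cases v with
    | none =>
      rw [nodesAtLevel, Finset.mem_filter]
      simp only [Finset.mem_univ, true_and, nodeLevel]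
      simp
      omega
    | some i =>
      rw [nodesAtLevel, Finset.mem_filter]
      simp only [Finset.mem_univ, true_and, nodeLevel, isNode]
      simp [hs]
  have e2 : ∀ i ∈ s, bfsScore n w (some i) =
      1 + cnt (fun x => x < (l : ℤ)) 0 (lst w) + (s.filter (fun j : Fin (2 * n) => (j : ℕ) < (i : ℕ))).card := by
    intro i hi
    simp only [hs, Finset.mem_filter, Finset.mem_univ, true_and] at hi
    rw [← card_cnt]
    simp only [bfsScore, nodeLevel, hi.2, add_assoc, zero_add]
    congr 1
    rw [← Finset.card_union_of_disjoint]
    · congr 1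
      ext j
      simp [hs]
      tauto
    · rw [Finset.disjoint_left]
      intro j h1 h2
      simp [hs] at h1 h2
      omega
  rw [e1, Finset.sum_map]
  simp only [Function.Embedding.some_apply]
  rw [Finset.sum_congr rfl e2]
  push_cast
  rw [Finset.sum_add_distrib, sum_rank, QL, Finset.sum_const, hcs]
  push_cast
  simp
  ring

/-- tree statistic -/
def Q (l : ℕ) (t : BinaryTree Unit) : ℚ :=
  (N t l : ℚ) * S t l + (N t l : ℚ) * ((N t l : ℚ) - 1) / 2

lemma totalB_eq (n l : ℕ) :
    (totalB n (l + 1) : ℚ) = ∑ t ∈ BinaryTree.treesOfNumNodesEq n, Q (l + 1) t := by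
  unfold totalB
  rw [Nat.cast_sum, Finset.sum_congr rfl (fun w _ => sum_bfs n (l + 1) (by omega) w), sum_dyckWords]
  refine Finset.sum_congr rfl fun t _ => ?_
  rw [QL, Q, cnt_eq t l 0 _ (by simp), cnt_lt t l 0 _ (by simp)]


/-- generating function of a statistic -/
noncomputable def gf (F : BinaryTree Unit → ℚ) : PowerSeries ℚ :=
  PowerSeries.mk fun n => ∑ t ∈ BinaryTree.treesOfNumNodesEq n, F t

/-- generating function of a pair statistic -/
noncomputable def gf2 (F : BinaryTree Unit → BinaryTree Unit → ℚ) : PowerSeries ℚ :=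
  PowerSeries.mk fun n => ∑ x ∈ Finset.HasAntidiagonal.antidiagonal n,
    ∑ p ∈ BinaryTree.treesOfNumNodesEq x.1, ∑ q ∈ BinaryTree.treesOfNumNodesEq x.2, F p q

lemma gf_add (F G) : gf (fun t => F t + G t) = gf F + gf G := by
  ext n; simp [gf, Finset.sum_add_distrib]

lemma gf2_add (F G) : gf2 (fun p q => F p q + G p q) = gf2 F + gf2 G := by
  ext n; simp [gf2, Finset.sum_add_distrib]

lemma gf2_mul (a b) : gf2 (fun p q => a p * b q) = gf a * gf b := by
  ext n
  simp only [gf2, gf, PowerSeries.coeff_mul, PowerSeries.coeff_mk, Finset.sum_mul_sum]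

lemma sum_trees_succ (n : ℕ) (F : BinaryTree Unit → ℚ) :
    ∑ t ∈ BinaryTree.treesOfNumNodesEq (n + 1), F t = ∑ x ∈ Finset.HasAntidiagonal.antidiagonal n,
    ∑ p ∈ BinaryTree.treesOfNumNodesEq x.1, ∑ q ∈ BinaryTree.treesOfNumNodesEq x.2,
      F (.node () p q) := by
  rw [BinaryTree.treesOfNumNodesEq_succ, Finset.sum_biUnion]
  · refine Finset.sum_congr rfl fun x _ => ?_
    rw [BinaryTree.pairwiseNode, Finset.sum_map, Finset.sum_product]
    rfl
  · intro x hx y hy hxy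
    rw [Function.onFun, Finset.disjoint_left]
    intro t ht ht'
    simp only [BinaryTree.pairwiseNode, Finset.mem_map, Finset.mem_product,
      BinaryTree.mem_treesOfNumNodesEq] at ht ht'
    obtain ⟨a, ⟨h1, h2⟩, rfl⟩ := ht
    obtain ⟨b, ⟨h3, h4⟩, h5⟩ := ht'
    simp at h5
    apply hxy
    ext
    · rw [← h1, ← h3, h5]
    · rw [← h2, ← h4, h5]

lemma gf_rec (F : BinaryTree Unit → ℚ) :
    gf F = PowerSeries.C (F .nil) + PowerSeries.X * gf2 (fun p q => F (.node () p q)) := by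
  ext n
  cases n with
  | zero => simp [gf]
  | succ n =>
    rw [map_add, PowerSeries.coeff_succ_X_mul, PowerSeries.coeff_C, if_neg (by omega)]
    simp [gf, gf2, sum_trees_succ]

local notation "Xs" => (PowerSeries.X : PowerSeries ℚ)

/-- Catalan series -/
noncomputable def K : PowerSeries ℚ := gf (fun _ => 1)

lemma K_eq : K = 1 + Xs * K ^ 2 := by
  have h := gf2_mul (fun _ => 1) (fun _ => 1)
  simp only [mul_one] at h
  conv_lhs => rw [K, gf_rec, h]
  simp [K, sq]

lemma K_uniq (Cs : PowerSeries ℚ) (hC : Cs = 1 + Xs * Cs ^ 2) : Cs = K := by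
  have hK := K_eq
  have h : (Cs - K) * (1 - Xs * (Cs + K)) = 0 := by linear_combination hC - hK
  rcases mul_eq_zero.1 h with h | h
  · exact sub_eq_zero.1 h
  · have := congrArg PowerSeries.constantCoeff h
    simp at this

lemma K_inv : K * (1 - Xs * K) = 1 := by linear_combination K_eq

/-- gf of level counts -/
noncomputable def M (l : ℕ) : PowerSeries ℚ := gf (fun t => (N t l : ℚ))

/-- gf of partial sums -/
noncomputable def Sg (l : ℕ) : PowerSeries ℚ := gf (fun t => (S t l : ℚ))

lemma M_zero : M 0 = K := by simp [M, K, N_zero]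

lemma M_succ (l : ℕ) : M (l + 1) = Xs * K ^ 2 * M l := by
  have h : M (l + 1) = Xs * (M l * K + K * M (l + 1)) := by
    conv_lhs => rw [M, gf_rec]
    have e : gf2 (fun p q => ((N (.node () p q) (l + 1) : ℕ) : ℚ)) =
      gf2 (fun p q => (N p l : ℚ) * 1 + 1 * (N q (l + 1) : ℚ)) := by
      congr 1; funext p q; simp [N]
    rw [e, gf2_add, gf2_mul, gf2_mul]
    simp [N, M, K]
  linear_combination K * h - M (l + 1) * K_inv

lemma Sg_zero : Sg 0 = 0 := by ext n; simp [Sg, S, gf]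

lemma Sg_succ (l : ℕ) : Sg (l + 1) = Sg l + M l := by
  rw [Sg, Sg, M, ← gf_add]
  simp [S_succ]

/-- gf of Q -/
noncomputable def B (l : ℕ) : PowerSeries ℚ := gf (Q l)

lemma B_zero : B 0 = 0 := by ext n; simp [B, Q, S, N_zero, gf]

lemma Q_node (l : ℕ) (p q : BinaryTree Unit) : Q (l + 1) (.node () p q) =
    Q l p * 1 + 1 * Q (l + 1) q + (N p l : ℚ) * (S q (l + 2) : ℚ)
      + (S p l : ℚ) * (N q (l + 1) : ℚ) := by
  simp only [Q, S_node, N, S_succ q (l + 1)]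
  push_cast
  ring

lemma B_succ' (l : ℕ) : B (l + 1) =
    Xs * (B l * K + K * B (l + 1) + M l * Sg (l + 2) + Sg l * M (l + 1)) := by
  conv_lhs => rw [B, gf_rec]
  simp only [Q_node]
  rw [gf2_add, gf2_add, gf2_add, gf2_mul, gf2_mul, gf2_mul, gf2_mul]
  simp [Q, N, B, M, Sg, K]

lemma B_succ (l : ℕ) : B (l + 1) = Xs * K ^ 2 * B l + M (l + 1) * Sg (l + 1) := by
  have h := B_succ' l
  have h1 := Sg_succ (l + 1)
  have h2 := Sg_succ l
  have h3 := M_succ l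
  have h4 : B (l + 1) = Xs * K ^ 2 * B l
      + Xs * K * (M l * Sg (l + 2) + Sg l * M (l + 1)) := by
    linear_combination K * h - B (l + 1) * K_inv
  rw [h4, h1, h2, h3]
  linear_combination (- Xs * K * M l * (Sg l + M l)) * K_eq

lemma M_eq (l : ℕ) : M l = Xs ^ l * K ^ (2 * l + 1) := by
  induction l with
  | zero => simp [M_zero]
  | succ l ih => rw [M_succ, ih]; ring

lemma coeff_fibP (n k : ℕ) : (fibP (n : ℤ)).coeff k = (Nat.choose (n - k) k : ℚ) := by
  rw [fibP, if_neg (by omega)]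
  simp only [Int.toNat_natCast, Polynomial.finsetSum_coeff, Polynomial.coeff_C_mul,
    Polynomial.coeff_X_pow]
  simp only [mul_ite, mul_one, mul_zero, Finset.sum_ite_eq, Finset.mem_range]
  split_ifs with h
  · rfl
  · rw [Nat.choose_eq_zero_of_lt (by omega)]; simp

lemma fibP_rec (n : ℕ) : fibP ((n + 2 : ℕ) : ℤ) =
    fibP ((n + 1 : ℕ) : ℤ) + Polynomial.X * fibP (n : ℤ) := by
  ext k
  rw [Polynomial.coeff_add, coeff_fibP, coeff_fibP]
  cases k with
  | zero => simp
  | succ k =>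
    rw [Polynomial.coeff_X_mul, coeff_fibP]
    by_cases h : k ≤ n
    · rw [show n + 2 - (k + 1) = (n - k) + 1 by omega, show n + 1 - (k + 1) = n - k by omega,
        Nat.choose_succ_succ]
      push_cast; ring
    · rw [show n + 2 - (k + 1) = 0 by omega, show n + 1 - (k + 1) = 0 by omega,
        show n - k = 0 by omega]
      cases k with
      | zero => omega
      | succ k => simp

/-- natural-number indexed version -/
noncomputable def g (n : ℕ) : Polynomial ℚ := fibPneg (n : ℤ)

lemma g_rec (n : ℕ) : g (n + 2) = g (n + 1) - Polynomial.X * g n := by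
  unfold g fibPneg
  rw [fibP_rec]
  simp [sub_eq_add_neg]

lemma g_zero : g 0 = 1 := by
  simp [g, fibPneg, fibP]

lemma g_one : g 1 = 1 := by
  simp [g, fibPneg, fibP]

lemma Sg_g (n : ℕ) : Sg (n + 1) = K ^ (n + 1) * ((g n : Polynomial ℚ) : PowerSeries ℚ) := by
  induction n using Nat.twoStepInduction with
  | zero => simp [Sg_succ, Sg_zero, M_zero, g_zero]
  | one =>
    rw [Sg_succ, Sg_succ, Sg_zero, M_succ, M_zero, g_one]
    simp
    linear_combination -K * K_eq
  | more n h1 h2 =>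
    have e1 := Sg_succ (n + 2)
    have e2 := Sg_succ (n + 1)
    have e3 := M_succ (n + 1)
    have e4 : Sg (n + 3) = K * Sg (n + 2) - Xs * K ^ 2 * Sg (n + 1) := by
      linear_combination e1 - (Xs * K ^ 2) * e2 + e3 - Sg (n + 2) * K_eq
    rw [show n + 2 + 1 = n + 3 from rfl, e4, h1, h2, g_rec, Polynomial.coe_sub, Polynomial.coe_mul,
      Polynomial.coe_X]
    ring

/-- derivative series -/
noncomputable def dg (n : ℕ) : PowerSeries ℚ := ((Polynomial.derivative (g n)) : PowerSeries ℚ)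

lemma dg_rec (n : ℕ) : dg (n + 2) = dg (n + 1) - (g n : PowerSeries ℚ) - Xs * dg n := by
  unfold dg
  rw [g_rec, Polynomial.derivative_sub, Polynomial.derivative_mul, Polynomial.derivative_X]
  rw [Polynomial.coe_sub, Polynomial.coe_add, Polynomial.coe_mul, Polynomial.coe_mul,
      Polynomial.coe_X, Polynomial.coe_one]
  ring

lemma B_eq (l : ℕ) : B l = Xs ^ l * K ^ (3 * l + 1) * (Xs * K * dg l - dg (l + 1)) := by
  induction l with
  | zero => simp [B_zero, dg, g_zero, g_one]
  | succ l ih =>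
    rw [B_succ, ih, Sg_g, M_eq, dg_rec]
    have h := K_inv
    linear_combination (Xs ^ (l + 1) * K ^ (3 * l + 3) * dg (l + 1)) * h

end TB

/-- The generating function B_ℓ(z) = ∑_n totalB(n,ℓ) z^n satisfies
B_ℓ(z) = z^ℓ·C^{3ℓ+1}·(zC·(d/dz)f_ℓ(−z) − (d/dz)f_{ℓ+1}(−z)), where C = 1 + zC² is the
Catalan generating function. -/
theorem totalB_genFun (ℓ : ℕ) (hℓ : 1 ≤ ℓ) (Cs : PowerSeries ℚ)
    (hC : Cs = 1 + PowerSeries.X * Cs ^ 2) :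
    PowerSeries.mk (fun n => (totalB n ℓ : ℚ)) =
      PowerSeries.X ^ ℓ * Cs ^ (3 * ℓ + 1) *
        (PowerSeries.X * Cs *
            ((Polynomial.derivative (fibPneg (ℓ : ℤ))) : PowerSeries ℚ)
          - ((Polynomial.derivative (fibPneg ((ℓ : ℤ) + 1))) : PowerSeries ℚ)) := by
  obtain ⟨l, rfl⟩ : ∃ l, ℓ = l + 1 := ⟨ℓ - 1, by omega⟩
  have h := TB.B_eq (l + 1)
  rw [TB.K_uniq Cs hC]
  have e : PowerSeries.mk (fun n => (totalB n (l + 1) : ℚ)) = TB.B (l + 1) := by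
    ext n
    simp [TB.B, TB.gf, TB.totalB_eq]
  rw [e, h]
  rfl
end
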